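/- For every integer d ≥ 2 there exists a finite tournament T that is critical d-dominated and has no (d+1)-dominating subtournament: T is d-dominated, no proper subtournament of T is d-dominated, and no subtournament of T is (d+1)-dominating. -/

import Mathlib

/-!
Among the vertex sets of a finite `d`-dominated tournament that span a `d`-dominated or a
`d`-dominating subtournament, choose an inclusion-minimal one and, reversing all edges if
necessary, assume that the subtournament it spans is `d`-dominated. It is critical by minimality.
If a subtournament on `U` were `(d + 1)`-dominating, the out-neighbors in `U` of any vertex
of `U` would span a `d`-dominating subtournament missing that vertex, against minimality.

A finite `d`-dominated tournament to start from: each vertex carries a level, a label and a code,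
the code being a set of at most `d` labels. Between different levels, the vertex of lower level
beats the other one iff its code contains the label of the other. At most `d` vertices miss some
level, and a vertex on this level that beats them all lists their labels in its code and has a
label outside their codes.
-/

/-- `E` is a tournament on `V`: loopless, and for all distinct `x,y` exactly one of
`(x,y)`, `(y,x)` is an edge. -/
def IsTournament {V : Type*} (E : V → V → Prop) : Prop :=
  (∀ x : V, ¬ E x x) ∧ ∀ x y : V, x ≠ y → (E x y ↔ ¬ E y x)

/-- The restriction of the digraph `E` to `U` is `d`-dominating: every finite `S ⊆ U`
with `1 ≤ |S| ≤ d` has a common out-neighbor in `U`. -/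
def DomOn {V : Type*} (E : V → V → Prop) (d : ℕ) (U : Set V) : Prop :=
  ∀ S : Finset V, ↑S ⊆ U → S.Nonempty → S.card ≤ d → ∃ w ∈ U, ∀ s ∈ S, E s w

/-- The restriction of the digraph `E` to `U` is `d`-dominated: every finite `S ⊆ U`
with `1 ≤ |S| ≤ d` has a common in-neighbor in `U`. -/
def DomedOn {V : Type*} (E : V → V → Prop) (d : ℕ) (U : Set V) : Prop :=
  ∀ S : Finset V, ↑S ⊆ U → S.Nonempty → S.card ≤ d → ∃ w ∈ U, ∀ s ∈ S, E w s

variable {V W : Type*} {E R : V → V → Prop} {d : ℕ} {U : Set V}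

theorem IsTournament.swap (hE : IsTournament E) : IsTournament (Function.swap E) :=
  ⟨hE.1, fun x y hxy => hE.2 y x hxy.symm⟩

theorem IsTournament.preimage {f : W → V} (hE : IsTournament E) (hf : f.Injective) :
    IsTournament (f ⁻¹'o E) :=
  ⟨fun x => hE.1 (f x), fun _ _ hxy => hE.2 _ _ (hf.ne hxy)⟩

theorem exists_isTournament_ge_of_asymm (hR : ∀ x y, R x y → ¬ R y x) :
    ∃ E, IsTournament E ∧ R ≤ E := by
  refine ⟨fun x y => R x y ∨ ¬ R y x ∧ WellOrderingRel x y, ⟨fun x => ?_, fun x y hxy => ?_⟩,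
    fun _ _ => Or.inl⟩
  · rintro (h | ⟨-, h⟩)
    · exact hR x x h h
    · exact irrefl_of WellOrderingRel x h
  · have hR' := hR x y
    have hasymm : WellOrderingRel x y → ¬ WellOrderingRel y x := asymm_of WellOrderingRel
    rcases trichotomous_of WellOrderingRel x y with h | h | h <;> tauto

theorem DomedOn.mono_rel (h : DomedOn R d U) (hRE : R ≤ E) : DomedOn E d U := by
  intro S hSU hS hcard
  obtain ⟨w, hwU, hw⟩ := h S hSU hS hcard
  exact ⟨w, hwU, fun s hs => hRE w s (hw s hs)⟩

theorem domOn_iff_domedOn_swap : DomOn E d U ↔ DomedOn (Function.swap E) d U :=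
  Iff.rfl

theorem domedOn_preimage_iff {f : W → V} (hf : f.Injective) {U : Set W} :
    DomedOn (f ⁻¹'o E) d U ↔ DomedOn E d (f '' U) := by
  classical
  constructor <;> intro h S hSU hS hcard
  · obtain ⟨T, hTU, rfl⟩ := Finset.subset_set_image_iff.1 hSU
    rw [Finset.card_image_of_injective T hf] at hcard
    obtain ⟨w, hwU, hw⟩ := h T hTU hS.of_image hcard
    exact ⟨f w, Set.mem_image_of_mem f hwU, Finset.forall_mem_image.2 hw⟩
  · have hSU' : ↑(S.image f) ⊆ f '' U := by
      rw [Finset.coe_image]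
      exact Set.image_mono hSU
    obtain ⟨_, ⟨w, hwU, rfl⟩, hw⟩ := h (S.image f) hSU' (hS.image f)
      (Finset.card_image_le.trans hcard)
    exact ⟨w, hwU, fun s hs => hw (f s) (Finset.mem_image_of_mem f hs)⟩

theorem domOn_preimage_iff {f : W → V} (hf : f.Injective) {U : Set W} :
    DomOn (f ⁻¹'o E) d U ↔ DomOn E d (f '' U) :=
  domedOn_preimage_iff (E := Function.swap E) hf

theorem DomOn.nonempty_outNeighbors {v : V} (h : DomOn E (d + 1) U) (hv : v ∈ U) :
    {w ∈ U | E v w}.Nonempty := by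
  obtain ⟨w, hwU, hw⟩ := h {v} (by simpa using hv) (by simp) (by simp)
  exact ⟨w, hwU, hw v (by simp)⟩

theorem DomOn.outNeighbors {v : V} (h : DomOn E (d + 1) U) (hv : v ∈ U) :
    DomOn E d {w ∈ U | E v w} := by
  classical
  intro S hSU _ hcard
  have hinsert : ↑(insert v S) ⊆ U := by
    rw [Finset.coe_insert]
    exact Set.insert_subset hv fun s hs => (hSU hs).1
  obtain ⟨w, hwU, hw⟩ := h (insert v S) hinsert (S.insert_nonempty v)
    ((S.card_insert_le v).trans (Nat.succ_le_succ hcard))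
  rw [Finset.forall_mem_insert] at hw
  exact ⟨w, ⟨hwU, hw.1⟩, hw.2⟩

theorem not_domOn_succ_of_forall_not_domOn (hE : ∀ x, ¬ E x x)
    (h : ∀ U : Set V, U.Nonempty → U ≠ Set.univ → ¬ DomOn E d U) (hU : U.Nonempty) :
    ¬ DomOn E (d + 1) U := by
  intro hdom
  obtain ⟨v, hv⟩ := hU
  have hne : {w ∈ U | E v w} ≠ Set.univ :=
    (Set.ne_univ_iff_exists_notMem _).2 ⟨v, fun hmem => hE v hmem.2⟩
  exact h _ (hdom.nonempty_outNeighbors hv) hne (hdom.outNeighbors hv)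

theorem IsTournament.exists_minimal_domedOn [Finite V] [Nonempty V] (hE : IsTournament E)
    (hdom : DomedOn E d Set.univ) :
    ∃ E' : V → V → Prop, IsTournament E' ∧ ∃ W : Set V, W.Nonempty ∧ DomedOn E' d W ∧
      ∀ U ⊂ W, U.Nonempty → ¬ DomedOn E' d U ∧ ¬ DomOn E' d U := by
  obtain ⟨W, ⟨hWne, hW⟩, hmin⟩ := exists_minimal_of_wellFoundedLT
    (fun U : Set V => U.Nonempty ∧ (DomedOn E d U ∨ DomOn E d U))
    ⟨Set.univ, Set.univ_nonempty, Or.inl hdom⟩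
  have hproper : ∀ U ⊂ W, U.Nonempty → ¬ DomedOn E d U ∧ ¬ DomOn E d U := fun U hUW hU =>
    not_or.1 fun h => hUW.2 (hmin ⟨hU, h⟩ hUW.1)
  rcases hW with hW | hW
  · exact ⟨E, hE, W, hWne, hW, hproper⟩
  · exact ⟨Function.swap E, hE.swap, W, hWne, domOn_iff_domedOn_swap.1 hW,
      fun U hUW hU => (hproper U hUW hU).symm⟩

/-- The vertices of an explicit `d`-dominated tournament: a level in `ι`, a label in `β`, and a
code consisting of at most `d` labels. -/
structure CodedVertex (ι β : Type*) (d : ℕ) where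
  level : ι
  label : β
  code : Finset β
  card_code_le : code.card ≤ d

namespace CodedVertex

variable {ι β : Type*}

instance [Finite ι] [Finite β] : Finite (CodedVertex ι β d) :=
  Finite.of_injective (fun x => (x.level, x.label, x.code)) fun x y h => by
    cases x; cases y; simp_all

instance [Nonempty ι] [Nonempty β] : Nonempty (CodedVertex ι β d) :=
  ⟨⟨Classical.arbitrary ι, Classical.arbitrary β, ∅, Nat.zero_le d⟩⟩

/-- The edges of an explicit `d`-dominated tournament between vertices of different levels: the
code of the lower vertex decides. Vertices of the same level are left incomparable. -/
def Beats [LT ι] (x y : CodedVertex ι β d) : Prop :=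
  x.level < y.level ∧ y.label ∈ x.code ∨ y.level < x.level ∧ x.label ∉ y.code

theorem Beats.asymm [Preorder ι] {x y : CodedVertex ι β d} : x.Beats y → ¬ y.Beats x := by
  rintro (⟨hxy, hmem⟩ | ⟨hyx, hmem⟩) (⟨hyx', hmem'⟩ | ⟨hxy', hmem'⟩)
  · exact hxy.asymm hyx'
  · exact hmem' hmem
  · exact hmem hmem'
  · exact hyx.asymm hxy'

theorem domedOn_beats [LinearOrder ι] [Fintype ι] [Fintype β] (hι : d < Fintype.card ι)
    (hβ : d * d < Fintype.card β) :
    DomedOn (Beats : CodedVertex ι β d → CodedVertex ι β d → Prop) d Set.univ := by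
  classical
  intro S _ _ hcard
  obtain ⟨t, -, ht⟩ : ∃ t ∈ Finset.univ, t ∉ S.image level :=
    Finset.exists_mem_notMem_of_card_lt_card ((Finset.card_image_le.trans hcard).trans_lt hι)
  have hcodes : (S.biUnion code).card ≤ d * d :=
    (S.card_biUnion_le_card_mul code d fun s _ => s.card_code_le).trans
      (Nat.mul_le_mul_right d hcard)
  obtain ⟨b, -, hb⟩ : ∃ b ∈ Finset.univ, b ∉ S.biUnion code :=
    Finset.exists_mem_notMem_of_card_lt_card (hcodes.trans_lt hβ)
  refine ⟨⟨t, b, S.image label, Finset.card_image_le.trans hcard⟩, Set.mem_univ _, fun s hs => ?_⟩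
  have hts : t ≠ s.level := fun h => ht (h ▸ Finset.mem_image_of_mem level hs)
  rcases hts.lt_or_gt with h | h
  · exact Or.inl ⟨h, Finset.mem_image_of_mem label hs⟩
  · exact Or.inr ⟨h, fun hbs => hb (Finset.mem_biUnion.2 ⟨s, hs, hbs⟩)⟩

end CodedVertex

theorem exists_finite_domedOn_univ (d : ℕ) :
    ∃ (V : Type) (_ : Finite V) (_ : Nonempty V) (E : V → V → Prop),
      IsTournament E ∧ DomedOn E d Set.univ := by
  obtain ⟨E, hE, hle⟩ := exists_isTournament_ge_of_asymm
    fun _ _ => CodedVertex.Beats.asymm (ι := Fin (d + 1)) (β := Fin (d * d + 1)) (d := d)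
  exact ⟨_, inferInstance, inferInstance, E, hE,
    (CodedVertex.domedOn_beats (by simp) (by simp)).mono_rel hle⟩

theorem critical_d_dominated_exists_general (d : ℕ) :
    ∃ (V : Type) (_ : Fintype V) (_ : Nonempty V) (E : V → V → Prop),
      IsTournament E ∧
      DomedOn E d (Set.univ : Set V) ∧
      (∀ U : Set V, U.Nonempty → U ≠ Set.univ → ¬ DomedOn E d U ∧ ¬ DomOn E d U) ∧
      (∀ U : Set V, U.Nonempty → ¬ DomOn E (d + 1) U) := by
  obtain ⟨V, _, _, E₀, hE₀, hdom₀⟩ := exists_finite_domedOn_univ d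
  obtain ⟨E, hE, W, hWne, hW, hproper⟩ := hE₀.exists_minimal_domedOn hdom₀
  have hval : (Subtype.val : W → V).Injective := Subtype.val_injective
  have hcrit : ∀ U : Set W, U.Nonempty → U ≠ Set.univ →
      ¬ DomedOn (Subtype.val ⁻¹'o E) d U ∧ ¬ DomOn (Subtype.val ⁻¹'o E) d U := by
    intro U hU hne
    have hss : Subtype.val '' U ⊂ W := by
      simpa using hval.image_strictMono (Set.ssubset_univ_iff.2 hne)
    rw [domedOn_preimage_iff hval, domOn_preimage_iff hval]
    exact hproper _ hss (hU.image _)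
  have hT : IsTournament (Subtype.val ⁻¹'o E) := hE.preimage hval
  exact ⟨W, Fintype.ofFinite W, hWne.to_subtype, Subtype.val ⁻¹'o E, hT,
    (domedOn_preimage_iff hval).2 (by simpa using hW), hcrit,
    fun _ => not_domOn_succ_of_forall_not_domOn hT.1 fun U hU hne => (hcrit U hU hne).2⟩

/-- For every `d ≥ 2` there exists a finite tournament which is critical `d`-dominated
(it is `d`-dominated but no proper subtournament is) and has no `(d+1)`-dominating
subtournament. -/
theorem critical_d_dominated_exists (d : ℕ) (hd : 2 ≤ d) :
    ∃ (V : Type) (_ : Fintype V) (_ : Nonempty V) (E : V → V → Prop),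
      IsTournament E ∧
      DomedOn E d (Set.univ : Set V) ∧
      (∀ U : Set V, U.Nonempty → U ≠ Set.univ → ¬ DomedOn E d U) ∧
      (∀ U : Set V, U.Nonempty → ¬ DomOn E (d + 1) U) := by
  obtain ⟨V, hfin, hne, E, hE, hdom, hcrit, hsucc⟩ := critical_d_dominated_exists_general d
  exact ⟨V, hfin, hne, E, hE, hdom, fun U hU hU' => (hcrit U hU hU').1, hsucc⟩
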